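/- Let A be an n×n real matrix, B an n×m real matrix, λ_1,…,λ_n a conjugate-ordered list of complex numbers with 2s non-real entries, and Λ = diag(λ_1,…,λ_n). Suppose a real m×n matrix F and an invertible complex n×n matrix X satisfy (A + B F) X = X Λ, where the columns x_j of X satisfy x_{i+1} = conj(x_i) for every odd i ≤ 2s and x_j is real for j > 2s. Define w_j := F x_j and let W′ be the m×n matrix with columns w_j. Then (A − λ_j I_n) x_j + B w_j = 0 for every j, w_{i+1} = conj(w_i) for every odd i ≤ 2s and w_j is real for j > 2s, the realification V of X is invertible, and F = W V^{-1} where W is the realification of W′. -/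

import Mathlib

/-!
The columns of `(A + B F) X = X Λ`, rearranged, are the identities `(A - λ_j I) x_j + B w_j = 0`.
A real matrix commutes with entrywise conjugation and with real and imaginary parts, so
left multiplication by a real matrix preserves the conjugate structure
(`toC_mul_conj`, `toC_mul_im_eq_zero`) and commutes with realification (`realify_toC_mul`).
In particular `W = F V`, and it remains to invert `V`. A conjugate-structured matrix is determined
by its realification (`eq_zero_of_realify_eq_zero`); hence if a real row `v` satisfies `v V = 0`,
then `v X` is conjugate-structured with zero realification, so `v X = 0`, and `v = 0` because
`X` is invertible.
-/

open Matrix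

/-- Entrywise coercion of a real matrix to a complex matrix. -/
def toC {k l : ℕ} (M : Matrix (Fin k) (Fin l) ℝ) : Matrix (Fin k) (Fin l) ℂ :=
  M.map (fun x => (x : ℂ))

/-- The realification of a complex matrix whose columns are conjugate-ordered with
`2*s` leading "complex" columns. -/
def realify {k n : ℕ} (s : ℕ) (M : Matrix (Fin k) (Fin n) ℂ) :
    Matrix (Fin k) (Fin n) ℝ := fun i j =>
  if j.val < 2 * s ∧ j.val % 2 = 1 then
    (M i ⟨j.val - 1, lt_of_le_of_lt (Nat.sub_le _ _) j.isLt⟩).im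
  else (M i j).re

lemma toC_mul_re {k l p : ℕ} (G : Matrix (Fin k) (Fin l) ℝ) (X : Matrix (Fin l) (Fin p) ℂ)
    (i : Fin k) (j : Fin p) : ((toC G * X) i j).re = ∑ t, G i t * (X t j).re := by
  simp [toC, Matrix.mul_apply]

lemma toC_mul_im {k l p : ℕ} (G : Matrix (Fin k) (Fin l) ℝ) (X : Matrix (Fin l) (Fin p) ℂ)
    (i : Fin k) (j : Fin p) : ((toC G * X) i j).im = ∑ t, G i t * (X t j).im := by
  simp [toC, Matrix.mul_apply]

lemma realify_toC_mul {k l p : ℕ} (s : ℕ) (G : Matrix (Fin k) (Fin l) ℝ)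
    (X : Matrix (Fin l) (Fin p) ℂ) : realify s (toC G * X) = G * realify s X := by
  ext i j
  rw [Matrix.mul_apply]
  by_cases h : j.val < 2 * s ∧ j.val % 2 = 1
  · simp only [realify, if_pos h, toC_mul_im]
  · simp only [realify, if_neg h, toC_mul_re]

lemma toC_mul_conj {k l p : ℕ} (G : Matrix (Fin k) (Fin l) ℝ) (X : Matrix (Fin l) (Fin p) ℂ)
    {j j' : Fin p} (h : ∀ r, X r j' = (starRingEnd ℂ) (X r j)) (r : Fin k) :
    (toC G * X) r j' = (starRingEnd ℂ) ((toC G * X) r j) := by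
  simp [toC, Matrix.mul_apply, h]

lemma toC_mul_im_eq_zero {k l p : ℕ} (G : Matrix (Fin k) (Fin l) ℝ)
    (X : Matrix (Fin l) (Fin p) ℂ) {j : Fin p} (h : ∀ r, (X r j).im = 0) (r : Fin k) :
    ((toC G * X) r j).im = 0 := by
  simp [toC_mul_im, h]

/-- On conjugate-structured matrices, realification has trivial kernel. -/
lemma eq_zero_of_realify_eq_zero {k n : ℕ} (s : ℕ) (hs : 2 * s ≤ n)
    (M : Matrix (Fin k) (Fin n) ℂ)
    (hconj : ∀ (i : Fin n) (h : i.val + 1 < n), i.val % 2 = 0 → i.val < 2 * s →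
      ∀ r, M r ⟨i.val + 1, h⟩ = (starRingEnd ℂ) (M r i))
    (hreal : ∀ j : Fin n, 2 * s ≤ j.val → ∀ r, (M r j).im = 0)
    (h0 : realify s M = 0) : M = 0 := by
  -- The real part of an even complex column is read off at `j`, its imaginary part at `j + 1`.
  have heven : ∀ (j : Fin n), j.val % 2 = 0 → j.val < 2 * s → ∀ r, M r j = 0 := by
    intro j hj hjs r
    have h1 : j.val + 1 < n := by omega
    have hre := congrFun (congrFun h0 r) j
    have him := congrFun (congrFun h0 r) ⟨j.val + 1, h1⟩
    have c1 : ¬ (j.val < 2 * s ∧ j.val % 2 = 1) := by omega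
    have c2 : j.val + 1 < 2 * s ∧ (j.val + 1) % 2 = 1 := by omega
    simp only [realify, if_neg c1] at hre
    simp only [realify, if_pos c2] at him
    exact Complex.ext hre him
  ext r j
  rcases Nat.lt_or_ge j.val (2 * s) with hjs | hjs
  · rcases Nat.mod_two_eq_zero_or_one j.val with hj | hj
    · exact heven j hj hjs r
    · have hp : j.val - 1 < n := by omega
      have h1 : (j.val - 1) + 1 < n := by omega
      have hz := heven ⟨j.val - 1, hp⟩ (by simp only; omega) (by simp only; omega) r
      have hc := hconj ⟨j.val - 1, hp⟩ h1 (by simp only; omega) (by simp only; omega) r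
      have hjj : (⟨(j.val - 1) + 1, h1⟩ : Fin n) = j := Fin.ext (by simp only; omega)
      simp only [hjj] at hc
      rw [hc, hz]
      simp
  · have hre := congrFun (congrFun h0 r) j
    have c1 : ¬ (j.val < 2 * s ∧ j.val % 2 = 1) := by omega
    simp only [realify, if_neg c1] at hre
    exact Complex.ext hre (hreal j hjs r)

lemma isUnit_det_realify {n : ℕ} (s : ℕ) (hs : 2 * s ≤ n)
    (X : Matrix (Fin n) (Fin n) ℂ) (hX : IsUnit X.det)
    (hXconj : ∀ (i : Fin n) (h : i.val + 1 < n), i.val % 2 = 0 → i.val < 2 * s →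
      ∀ r, X r ⟨i.val + 1, h⟩ = (starRingEnd ℂ) (X r i))
    (hXreal : ∀ j : Fin n, 2 * s ≤ j.val → ∀ r, (X r j).im = 0) :
    IsUnit (realify s X).det := by
  rw [isUnit_iff_ne_zero]
  intro hdet
  obtain ⟨v, hv, hv0⟩ := Matrix.exists_vecMul_eq_zero_iff.mpr hdet
  apply hv
  let G : Matrix (Fin 1) (Fin n) ℝ := Matrix.of fun _ => v
  have hG : G * realify s X = 0 := by
    ext i j
    exact congrFun hv0 j
  have hGX : toC G * X = 0 :=
    eq_zero_of_realify_eq_zero s hs _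
      (fun i h hi his => toC_mul_conj G X (hXconj i h hi his))
      (fun j hj => toC_mul_im_eq_zero G X (hXreal j hj))
      (by rw [realify_toC_mul, hG])
  have hG0 : toC G = 0 := by
    rw [← Matrix.mul_nonsing_inv_cancel_right X (toC G) hX, hGX, Matrix.zero_mul]
  funext t
  have ht : ((v t : ℝ) : ℂ) = 0 := congrFun (congrFun hG0 0) t
  exact_mod_cast ht

/-- If a real gain `F` and an invertible, conjugate-structured
eigenvector matrix `X` satisfy `(A + BF) X = X Λ`, then with `w_j := F x_j`
(i.e. `W' = F X`) the columns satisfy `(A - λ_j I) x_j + B w_j = 0`, `W'` has the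
same conjugate structure, the realification `V` of `X` is invertible, and
`F = W V⁻¹` where `W` is the realification of `W'`. -/
theorem moore_parametric_comprehensive {n m : ℕ} (s : ℕ) (hs : 2 * s ≤ n)
    (A : Matrix (Fin n) (Fin n) ℝ) (B : Matrix (Fin n) (Fin m) ℝ)
    (lam : Fin n → ℂ)
    (hnonreal : ∀ j : Fin n, j.val < 2 * s → (lam j).im ≠ 0)
    (hconj : ∀ (i : Fin n) (h : i.val + 1 < n), i.val % 2 = 0 → i.val < 2 * s →
      lam ⟨i.val + 1, h⟩ = (starRingEnd ℂ) (lam i))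
    (hreal : ∀ j : Fin n, 2 * s ≤ j.val → (lam j).im = 0)
    (F : Matrix (Fin m) (Fin n) ℝ)
    (X : Matrix (Fin n) (Fin n) ℂ) (hX : IsUnit X.det)
    (hEPP : (toC A + toC B * toC F) * X = X * Matrix.diagonal lam)
    (hXconj : ∀ (i : Fin n) (h : i.val + 1 < n), i.val % 2 = 0 → i.val < 2 * s →
      ∀ r, X r ⟨i.val + 1, h⟩ = (starRingEnd ℂ) (X r i))
    (hXreal : ∀ j : Fin n, 2 * s ≤ j.val → ∀ r, (X r j).im = 0) :
    (∀ j : Fin n,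
      (toC A - lam j • (1 : Matrix (Fin n) (Fin n) ℂ)) *ᵥ (fun i => X i j)
        + toC B *ᵥ (fun i => (toC F * X) i j) = 0)
    ∧ (∀ (i : Fin n) (h : i.val + 1 < n), i.val % 2 = 0 → i.val < 2 * s →
        ∀ r, (toC F * X) r ⟨i.val + 1, h⟩ = (starRingEnd ℂ) ((toC F * X) r i))
    ∧ (∀ j : Fin n, 2 * s ≤ j.val → ∀ r, ((toC F * X) r j).im = 0)
    ∧ IsUnit (realify s X).det
    ∧ F = realify s (toC F * X) * (realify s X)⁻¹ := by
  have hV := isUnit_det_realify s hs X hX hXconj hXreal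
  refine ⟨fun j => ?_, fun i h hi his => toC_mul_conj F X (hXconj i h hi his),
    fun j hj => toC_mul_im_eq_zero F X (hXreal j hj), hV, ?_⟩
  · funext r
    have h := congrFun (congrFun hEPP r) j
    rw [Matrix.add_mul, Matrix.mul_assoc, Matrix.mul_diagonal, Matrix.add_apply] at h
    rw [Matrix.sub_mulVec, Matrix.smul_mulVec, Matrix.one_mulVec]
    change (toC A * X) r j - lam j * X r j + (toC B * (toC F * X)) r j = 0
    linear_combination h
  · rw [realify_toC_mul, Matrix.mul_nonsing_inv_cancel_right _ _ hV]
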